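/- arXiv:nlin/0406035 — 3 statements merged into one kernel-verified Lean document; each statement's English description precedes it below -/
import Mathlib

section
/- Let φ, ψ : ℂ → ℂ be entire (differentiable over ℂ everywhere, hence infinitely differentiable) functions. Define sequences a_n, b_n : ℂ → ℂ by a_0 = φ, a_n = a_{n-1}' + ψ·(∑_{i+j=n-2, i,j≥0} a_i a_j) for n ≥ 1, and b_0 = ψ, b_n = b_{n-1}' + φ·(∑_{i+j=n-2, i,j≥0} b_i b_j) for n ≥ 1. For N ∈ ℤ define the Hankel determinant τ_N : ℂ → ℂ by τ_N = det(a_{i+j})_{0≤i,j≤N-1} for N > 0, τ_0 = 1, and τ_N = det(b_{i+j})_{0≤i,j≤|N|-1} for N < 0. Then for every N ∈ ℤ and every x ∈ ℂ, the Toda equation holds: τ_N''(x)·τ_N(x) − (τ_N'(x))² = τ_{N+1}(x)·τ_{N-1}(x) − φ(x)ψ(x)·τ_N(x)². -/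
open Matrix in
theorem toda_hasDerivAt_det {m : Type*} [Fintype m] [DecidableEq m]
    (A : ℂ → Matrix m m ℂ) (B : Matrix m m ℂ) (x : ℂ)
    (h : ∀ i j, HasDerivAt (fun y => A y i j) (B i j) x) :
    HasDerivAt (fun y => (A y).det) (B * (A x).adjugate).trace x := by
  have h1 : (B * (A x).adjugate).trace = ∑ r, ((A x).updateRow r (B r)).det := by
    simp only [Matrix.trace, Matrix.diag]
    refine Finset.sum_congr rfl fun r _ => ?_
    rw [← Matrix.cramer_transpose_apply, Matrix.cramer_eq_adjugate_mulVec, ← Matrix.adjugate_transpose,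
      Matrix.mulVec_transpose, Matrix.mul_apply]
    rfl
  rw [h1]
  simp only [Matrix.det_apply']
  have h2 : ∀ σ : Equiv.Perm m, HasDerivAt
      (fun y => ((Equiv.Perm.sign σ : ℤ) : ℂ) * ∏ i, A y (σ i) i)
      (((Equiv.Perm.sign σ : ℤ) : ℂ) * ∑ i, (∏ j ∈ Finset.univ.erase i, A x (σ j) j) • B (σ i) i) x := by
    intro σ
    exact (HasDerivAt.fun_finsetProd (fun i _ => h (σ i) i)).const_mul _
  have h3 := HasDerivAt.fun_sum (u := Finset.univ) (fun σ _ => h2 σ)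
  refine h3.congr_deriv ?_
  rw [Finset.sum_comm]
  refine Finset.sum_congr rfl fun σ _ => ?_
  rw [← Finset.mul_sum]
  congr 1
  refine Eq.trans ?_ (Equiv.sum_comp σ _)
  refine Finset.sum_congr rfl fun i _ => ?_
  rw [← Finset.mul_prod_erase Finset.univ _ (Finset.mem_univ i), smul_eq_mul, mul_comm]
  congr 1
  · simp
  · refine Finset.prod_congr rfl fun j hj => ?_
    rw [Matrix.updateRow_ne]
    intro hh
    exact (Finset.mem_erase.1 hj).1 (σ.injective hh)

open Matrix in
theorem toda_jacobi_block_domain {R m : Type*} [CommRing R] [IsDomain R] [Fintype m] [DecidableEq m]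
    (A : Matrix (m ⊕ Fin 2) (m ⊕ Fin 2) R) (hA : A.det ≠ 0) :
    A.adjugate.toBlocks₂₂.det = A.toBlocks₁₁.det * A.det := by
  have h1 : A * fromBlocks 1 A.adjugate.toBlocks₁₂ 0 A.adjugate.toBlocks₂₂ =
      fromBlocks A.toBlocks₁₁ 0 A.toBlocks₂₁ (A.det • 1) := by
    have h := Matrix.mul_adjugate A
    generalize A.adjugate = B at h ⊢
    generalize A.det = d at h ⊢
    rw [← fromBlocks_toBlocks A, ← fromBlocks_toBlocks B, fromBlocks_multiply,
      ← fromBlocks_one, fromBlocks_smul, fromBlocks_inj] at h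
    rw [← fromBlocks_toBlocks A, fromBlocks_multiply]
    simp only [toBlocks_fromBlocks₁₁, toBlocks_fromBlocks₂₁]
    rw [h.2.1, h.2.2.2]
    simp
  have h2 := congrArg Matrix.det h1
  rw [Matrix.det_mul, det_fromBlocks_zero₂₁, det_fromBlocks_zero₁₂, det_smul] at h2
  simp only [det_one, one_mul, mul_one, Fintype.card_fin] at h2
  apply mul_left_cancel₀ hA
  rw [h2]; ring

open Matrix in
theorem toda_jacobi_block {m : Type*} [Fintype m] [DecidableEq m]
    (A : Matrix (m ⊕ Fin 2) (m ⊕ Fin 2) ℂ) :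
    A.adjugate.toBlocks₂₂.det = A.toBlocks₁₁.det * A.det := by
  have h := toda_jacobi_block_domain (mvPolynomialX (m ⊕ Fin 2) (m ⊕ Fin 2) ℤ)
    (det_mvPolynomialX_ne_zero _ ℤ)
  have h' := congrArg (MvPolynomial.aeval (R := ℤ) fun p : (m ⊕ Fin 2) × (m ⊕ Fin 2) => A p.1 p.2) h
  rw [map_mul, AlgHom.map_det, AlgHom.map_det, AlgHom.map_det,
    mvPolynomialX_mapMatrix_aeval ℤ A] at h'
  have e1 := mvPolynomialX_mapMatrix_aeval ℤ A
  have e2 := AlgHom.map_adjugate (MvPolynomial.aeval (R := ℤ) fun p : (m ⊕ Fin 2) × (m ⊕ Fin 2) => A p.1 p.2)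
    (mvPolynomialX (m ⊕ Fin 2) (m ⊕ Fin 2) ℤ)
  rw [e1] at e2
  rw [← e2]
  nth_rw 2 [← e1]
  exact h'

open Matrix in
theorem toda_jacobi (n : ℕ) (A : Matrix (Fin (n + 2)) (Fin (n + 2)) ℂ) :
    A.adjugate (Fin.last (n+1)) (Fin.last (n+1)) *
      A.adjugate (Fin.last n).castSucc (Fin.last n).castSucc -
      A.adjugate (Fin.last (n+1)) (Fin.last n).castSucc *
      A.adjugate (Fin.last n).castSucc (Fin.last (n+1)) =
    (A.submatrix (fun i : Fin n => i.castSucc.castSucc) (fun i : Fin n => i.castSucc.castSucc)).det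
      * A.det := by
  have h := toda_jacobi_block (A.submatrix (finSumFinEquiv (m := n) (n := 2)) finSumFinEquiv)
  rw [adjugate_submatrix_equiv_self, det_submatrix_equiv_self, det_fin_two] at h
  have e0 : finSumFinEquiv (m := n) (n := 2) (Sum.inr 0) = (Fin.last n).castSucc := by
    ext; simp
  have e1 : finSumFinEquiv (m := n) (n := 2) (Sum.inr 1) = Fin.last (n+1) := by
    ext; simp
  simp only [toBlocks₂₂, of_apply, submatrix_apply, e0, e1] at h
  have e3 : (A.submatrix (finSumFinEquiv (m := n) (n := 2)) finSumFinEquiv).toBlocks₁₁ =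
      A.submatrix (fun i : Fin n => i.castSucc.castSucc) (fun i : Fin n => i.castSucc.castSucc) := by
    ext i j
    simp only [toBlocks₁₁, of_apply, submatrix_apply, finSumFinEquiv_apply_left]
    rfl
  rw [e3] at h
  rw [← h]; ring

open Matrix in
/-- vector-matrix product with the adjugate as a determinant -/
theorem toda_vecMul_adjugate {m : Type*} [Fintype m] [DecidableEq m]
    (P : Matrix m m ℂ) (v : m → ℂ) (r : m) :
    (v ᵥ* P.adjugate) r = (P.updateRow r v).det := by
  rw [← Matrix.cramer_transpose_apply, Matrix.cramer_eq_adjugate_mulVec, ← Matrix.adjugate_transpose,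
      Matrix.mulVec_transpose]

open Matrix in
/-- algebraic core: derivative of the `p`-th column of the adjugate. -/
theorem toda_adjugate_core {m : Type*} [Fintype m] [DecidableEq m]
    (M W L dP : Matrix m m ℂ) (c : ℂ) (p q i : m) (hpq : q ≠ p)
    (hW0 : W p = 0) (hWp : ∀ r, W r p = if r = q then 1 else 0)
    (hWt : W.trace = 0) (hLt : L.trace = 0)
    (hdp : dP p = 0) (hd : ∀ r, r ≠ p → dP r = (W * M - c • (M * Lᵀ)) r) :
    (dP * (M.updateRow p (Pi.single i 1)).adjugate).trace =
      - M.adjugate i q + c * ∑ k, L k i * M.adjugate k p := by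
  set e : m → ℂ := Pi.single i 1 with he
  set P := M.updateRow p e with hP
  have key : dP = W * P + vecMulVec (Pi.single q 1) (M p - e) - c • (P * Lᵀ)
      + c • vecMulVec (Pi.single p 1) (e ᵥ* Lᵀ) := by
    ext r j
    by_cases hr : r = p
    · subst hr
      have : P r = e := by simp [hP]
      simp [hdp, mul_apply_eq_vecMul, this, hW0, vecMulVec_apply, hpq.symm]
    · rw [congrFun (hd r hr) j]
      have h1 : (M * Lᵀ) r j = (P * Lᵀ) r j := by
        simp [mul_apply, hP, updateRow_ne hr]
      have h2 : (W * M) r j = (W * P) r j + W r p * (M p j - e j) := by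
        rw [mul_apply, mul_apply, ← sub_eq_iff_eq_add', ← Finset.sum_sub_distrib,
          Finset.sum_eq_single p]
        · simp [hP]; ring
        · intro b _ hb
          simp [hP, updateRow_ne hb]
        · simp
      simp only [Matrix.sub_apply, Matrix.smul_apply, Matrix.add_apply, h1, h2, vecMulVec_apply, hWp,
        Pi.single_apply, hr, Pi.sub_apply, smul_eq_mul]
      simp
  have t1 : ∀ (r : m) (v : m → ℂ), (vecMulVec (Pi.single r 1) v * P.adjugate).trace =
      (P.updateRow r v).det := by
    intro r v
    rw [← toda_vecMul_adjugate, vecMulVec_mul, trace_vecMulVec]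
    simp
  have t2 : (W * P * P.adjugate).trace = 0 := by
    rw [Matrix.mul_assoc, mul_adjugate]; simp [hWt]
  have t3 : (P * Lᵀ * P.adjugate).trace = 0 := by
    rw [trace_mul_cycle, adjugate_mul]; simp [hLt]
  have t4 : (P.updateRow p (e ᵥ* Lᵀ)).det = ∑ k, L k i * M.adjugate k p := by
    rw [hP, updateRow_idem, ← toda_vecMul_adjugate]
    simp [vecMul, dotProduct, he, Pi.single_apply]
  have t5 : (P.updateRow q (M p - e)).det = - M.adjugate i q := by
    have s1 : (P.updateRow q e).det = 0 := by
      apply det_zero_of_row_eq hpq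
      simp [hP, updateRow_ne hpq.symm]
    have s2 : (P.updateRow q (M p)).det = - M.adjugate i q := by
      rw [adjugate_apply, ← he]
      have : P.updateRow q (M p) = (M.updateRow q e).submatrix (Equiv.swap p q) id := by
        ext r j
        by_cases hq : r = q
        · subst hq; simp [updateRow_ne hpq.symm]
        · by_cases hp : r = p
          · subst hp; simp [hP, updateRow_ne hpq.symm]
          · simp [hP, updateRow_ne hq, updateRow_ne hp, Equiv.swap_apply_of_ne_of_ne hp hq]
      rw [this, det_permute, Equiv.Perm.sign_swap hpq.symm]
      simp
    have s3 := det_updateRow_add P q (M p - e) e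
    rw [sub_add_cancel, s1, s2, add_zero] at s3
    exact s3.symm
  rw [key, Matrix.add_mul, Matrix.sub_mul, Matrix.add_mul, trace_add, trace_sub, trace_add,
    Matrix.smul_mul, Matrix.smul_mul, trace_smul, trace_smul, t1, t1, t2, t3, t4, t5]
  simp

theorem toda_sum_split (c : ℕ → ℂ) (i j : ℕ) :
    ∑ k ∈ Finset.range (i + j), c k * c (i + j - 1 - k) =
      ∑ s ∈ Finset.range i, c (i - 1 - s) * c (s + j) +
      ∑ s ∈ Finset.range j, c (i + s) * c (j - 1 - s) := by
  rw [Finset.sum_range_add]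
  congr 1
  · rw [← Finset.sum_range_reflect]
    refine Finset.sum_congr rfl fun s hs => ?_
    rw [Finset.mem_range] at hs
    congr 2; omega
  · refine Finset.sum_congr rfl fun s hs => ?_
    congr 2; omega

theorem toda_fin_sum (K r : ℕ) (hr : r ≤ K) (f : ℕ → ℂ) :
    ∑ s : Fin K, (if s.1 < r then f s.1 else 0) = ∑ s ∈ Finset.range r, f s := by
  rw [Fin.sum_univ_eq_sum_range (fun s => if s < r then f s else 0) K, ← Finset.sum_filter]
  refine Finset.sum_congr ?_ fun _ _ => rfl
  ext s; simp; omega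

theorem toda_differentiable (φ ψ : ℂ → ℂ) (hφ : Differentiable ℂ φ) (hψ : Differentiable ℂ ψ)
    (a : ℕ → ℂ → ℂ) (ha0 : a 0 = φ)
    (ha : ∀ n : ℕ, a (n + 1) =
      deriv (a n) + fun x => ψ x * ∑ k ∈ Finset.range n, a k x * a (n - 1 - k) x) (n : ℕ) :
    Differentiable ℂ (a n) := by
  induction n using Nat.strong_induction_on with
  | _ n ih =>
    rcases n with _ | n
    · rw [ha0]; exact hφ
    · rw [ha]
      refine Differentiable.add ?_ (hψ.mul ?_)
      · have := (ih n (by omega)).differentiableOn (s := Set.univ)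
        exact differentiableOn_univ.1 (this.deriv isOpen_univ)
      · refine Differentiable.fun_sum fun k hk => ?_
        rw [Finset.mem_range] at hk
        exact (ih k (by omega)).mul (ih (n - 1 - k) (by omega))

open Matrix in
theorem toda_deriv_adjugate (φ ψ : ℂ → ℂ) (hφ : Differentiable ℂ φ) (hψ : Differentiable ℂ ψ)
    (a : ℕ → ℂ → ℂ) (ha0 : a 0 = φ)
    (ha : ∀ n : ℕ, a (n + 1) =
      deriv (a n) + fun x => ψ x * ∑ k ∈ Finset.range n, a k x * a (n - 1 - k) x) (n : ℕ)
    (i : Fin (n + 2)) (x : ℂ) (M : ℂ → Matrix (Fin (n + 2)) (Fin (n + 2)) ℂ)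
    (hM : M = fun y => Matrix.of fun i j : Fin (n + 2) => a (i.1 + j.1) y) :
    HasDerivAt (fun y => (M y).adjugate i (Fin.last (n+1)))
      (- (M x).adjugate i (Fin.last n).castSucc +
        ψ x * ∑ k : Fin (n + 2), (if i.1 < k.1 then a (k.1 - 1 - i.1) x else 0) *
          (M x).adjugate k (Fin.last (n+1))) x := by
  have hd := toda_differentiable φ ψ hφ hψ a ha0 ha
  set L : Matrix (Fin (n + 2)) (Fin (n + 2)) ℂ :=
    Matrix.of fun k i => if i.1 < k.1 then a (k.1 - 1 - i.1) x else 0 with hL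
  set W : Matrix (Fin (n + 2)) (Fin (n + 2)) ℂ :=
    Matrix.of fun r s => if r = Fin.last (n+1) then 0 else
      (if s.1 = r.1 + 1 then 1 else 0) - ψ x * L r s with hW
  set dP : Matrix (Fin (n + 2)) (Fin (n + 2)) ℂ :=
    Matrix.of fun r s => if r = Fin.last (n+1) then 0 else deriv (a (r.1 + s.1)) x with hdP
  have core := toda_adjugate_core (M x) W L dP (ψ x) (Fin.last (n+1)) (Fin.last n).castSucc i
    (Fin.castSucc_lt_last _).ne ?_ ?_ ?_ ?_ ?_ ?_
  · have : ∑ k : Fin (n + 2), (if i.1 < k.1 then a (k.1 - 1 - i.1) x else 0) *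
          (M x).adjugate k (Fin.last (n+1)) = ∑ k, L k i * (M x).adjugate k (Fin.last (n+1)) := rfl
    rw [this, ← core]
    simp only [adjugate_apply]
    refine toda_hasDerivAt_det
      (fun y => (M y).updateRow (Fin.last (n+1)) (Pi.single i 1)) dP x ?_
    intro r s
    by_cases hr : r = Fin.last (n+1)
    · subst hr
      simp only [updateRow_self, hdP, of_apply, if_true]
      exact hasDerivAt_const _ _
    · simp only [updateRow_ne hr, hdP, of_apply, if_neg hr, hM]
      exact (hd _ x).hasDerivAt
  · ext s; simp [hW]
  · intro r
    by_cases hr : r = Fin.last (n+1)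
    · subst hr
      simp [hW, (Fin.castSucc_lt_last _).ne']
    · have h1 : ¬ (n + 1 < r.1) := by omega
      have h2 : (n + 1 = r.1 + 1) ↔ r = (Fin.last n).castSucc := by
        rw [Fin.ext_iff]; simp; omega
      simp only [hW, hL, of_apply, if_neg hr, Fin.val_last, if_neg h1, h2]
      simp
  · simp [Matrix.trace, hW, hL]
  · simp [Matrix.trace, hL]
  · ext s; simp [hdP]
  · intro r hr
    ext j
    have hr' : r.1 < n + 1 := by
      have := r.2
      have : r.1 ≠ n + 1 := fun h => hr (Fin.ext h)
      omega
    have e1 : deriv (a (r.1 + j.1)) x = a (r.1 + j.1 + 1) x -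
        ψ x * ∑ k ∈ Finset.range (r.1 + j.1), a k x * a (r.1 + j.1 - 1 - k) x := by
      rw [ha]; simp
    have e2 : (W * M x) r j = a (r.1 + j.1 + 1) x -
        ψ x * ∑ s ∈ Finset.range r.1, a (r.1 - 1 - s) x * a (s + j.1) x := by
      rw [mul_apply, ← toda_fin_sum (n+2) r.1 r.2.le]
      simp only [hW, of_apply, if_neg hr, sub_mul, Finset.sum_sub_distrib, hM, hL]
      congr 1
      · rw [Finset.sum_eq_single (⟨r.1 + 1, by omega⟩ : Fin (n+2))]
        · simp; congr 1; omega
        · intro b _ hb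
          rw [if_neg, zero_mul]
          intro h; exact hb (Fin.ext h)
        · simp
      · rw [Finset.mul_sum]
        refine Finset.sum_congr rfl fun s _ => ?_
        split_ifs <;> ring
    have e3 : (M x * Lᵀ) r j =
        ∑ s ∈ Finset.range j.1, a (r.1 + s) x * a (j.1 - 1 - s) x := by
      rw [mul_apply, ← toda_fin_sum (n+2) j.1 j.2.le]
      refine Finset.sum_congr rfl fun s _ => ?_
      simp [hM, hL]
    rw [Matrix.sub_apply, Matrix.smul_apply, e2, e3]
    simp only [hdP, of_apply, if_neg hr]
    rw [e1, toda_sum_split (fun k => a k x) r.1 j.1, smul_eq_mul]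
    ring

open Matrix in
theorem toda_half (φ ψ : ℂ → ℂ) (hφ : Differentiable ℂ φ) (hψ : Differentiable ℂ ψ)
    (a : ℕ → ℂ → ℂ) (ha0 : a 0 = φ)
    (ha : ∀ n : ℕ, a (n + 1) =
      deriv (a n) + fun x => ψ x * ∑ k ∈ Finset.range n, a k x * a (n - 1 - k) x)
    (h : ℕ → ℂ → ℂ) (hh : ∀ N, h N = fun x => (Matrix.of fun i j : Fin N => a (i.1 + j.1) x).det)
    (n : ℕ) (x : ℂ) :
    deriv (deriv (h (n+1))) x * h (n+1) x - (deriv (h (n+1)) x) ^ 2 =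
        h (n + 2) x * h n x - φ x * ψ x * (h (n+1) x) ^ 2 := by
  obtain ⟨M, hM⟩ : ∃ M : ℂ → Matrix (Fin (n + 2)) (Fin (n + 2)) ℂ,
    M = fun y => Matrix.of fun i j : Fin (n + 2) => a (i.1 + j.1) y := ⟨_, rfl⟩
  have hD := fun i x => toda_deriv_adjugate φ ψ hφ hψ a ha0 ha n i x M hM
  have hsymm : ∀ y i j, (M y).adjugate i j = (M y).adjugate j i := by
    intro y i j
    have : (M y).IsSymm := by
      ext i j; simp [hM, add_comm]
    exact this.adjugate.apply j i
  have h1 : h (n+1) = fun y => (M y).adjugate (Fin.last (n+1)) (Fin.last (n+1)) := by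
    rw [hh]; funext y
    rw [adjugate_fin_succ_eq_det_submatrix]
    rw [Even.neg_one_pow ⟨_, rfl⟩, one_mul]
    congr 1
    ext i j
    simp [hM]
  have d1 : deriv (h (n+1)) =
      fun y => - (M y).adjugate (Fin.last n).castSucc (Fin.last (n+1)) := by
    funext y
    rw [h1, (hD _ y).deriv, hsymm y (Fin.last n).castSucc]
    rw [Finset.sum_eq_zero, mul_zero, add_zero]
    intro k _
    rw [if_neg, zero_mul]
    simp; omega
  have d2 : deriv (deriv (h (n+1))) x =
      (M x).adjugate (Fin.last n).castSucc (Fin.last n).castSucc -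
        ψ x * (φ x * (M x).adjugate (Fin.last (n+1)) (Fin.last (n+1))) := by
    rw [d1, (hD _ x).fun_neg.deriv, Finset.sum_eq_single (Fin.last (n+1))]
    · simp [ha0]; ring
    · intro b _ hb
      rw [if_neg, zero_mul]
      have : b.1 ≠ n + 1 := fun h => hb (Fin.ext h)
      simp; omega
    · simp
  have J := toda_jacobi n (M x)
  have j1 : h (n+2) x = (M x).det := by rw [hh, hM]
  have j2 : h n x = ((M x).submatrix (fun i : Fin n => i.castSucc.castSucc)
      (fun i : Fin n => i.castSucc.castSucc)).det := by
    rw [hh, hM]; rfl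
  rw [d2, d1, j1, j2, h1]
  rw [hsymm x (Fin.last (n+1)) (Fin.last n).castSucc] at J
  linear_combination J


/-- **Hankel determinant formula for the Toda equation** (Proposition 2.1).
For entire `φ, ψ`, the Hankel determinants `τ_N` built from the sequences `a_n, b_n`
defined by the recursions `a_0 = φ`, `a_n = a_{n-1}' + ψ·∑_{i+j=n-2} a_i a_j`,
`b_0 = ψ`, `b_n = b_{n-1}' + φ·∑_{i+j=n-2} b_i b_j` satisfy the Toda equation
`τ_N'' τ_N − (τ_N')² = τ_{N+1} τ_{N-1} − φψ τ_N²`. -/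
theorem toda_hankel_determinant_formula
    (φ ψ : ℂ → ℂ) (hφ : Differentiable ℂ φ) (hψ : Differentiable ℂ ψ)
    (a b : ℕ → ℂ → ℂ)
    (ha0 : a 0 = φ)
    (ha : ∀ n : ℕ, a (n + 1) =
      deriv (a n) + fun x => ψ x * ∑ k ∈ Finset.range n, a k x * a (n - 1 - k) x)
    (hb0 : b 0 = ψ)
    (hb : ∀ n : ℕ, b (n + 1) =
      deriv (b n) + fun x => φ x * ∑ k ∈ Finset.range n, b k x * b (n - 1 - k) x)
    (τ : ℤ → ℂ → ℂ)
    (hτpos : ∀ N : ℕ, τ ((N : ℤ) + 1) =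
      fun x => (Matrix.of fun i j : Fin (N + 1) => a (i.1 + j.1) x).det)
    (hτ0 : τ 0 = 1)
    (hτneg : ∀ N : ℕ, τ (-((N : ℤ) + 1)) =
      fun x => (Matrix.of fun i j : Fin (N + 1) => b (i.1 + j.1) x).det) :
    ∀ (N : ℤ) (x : ℂ),
      deriv (deriv (τ N)) x * τ N x - (deriv (τ N) x) ^ 2 =
        τ (N + 1) x * τ (N - 1) x - φ x * ψ x * (τ N x) ^ 2 := by
  obtain ⟨h, hh⟩ : ∃ h : ℕ → ℂ → ℂ,
    ∀ N, h N = fun x => (Matrix.of fun i j : Fin N => a (i.1 + j.1) x).det := ⟨_, fun _ => rfl⟩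
  obtain ⟨g, hg⟩ : ∃ g : ℕ → ℂ → ℂ,
    ∀ N, g N = fun x => (Matrix.of fun i j : Fin N => b (i.1 + j.1) x).det := ⟨_, fun _ => rfl⟩
  have ht : ∀ N : ℕ, τ (N : ℤ) = h N := by
    intro N
    rcases N with _ | N
    · rw [hh]; funext y; simp [hτ0]
    · rw [hh, ← hτpos]; simp
  have hs : ∀ N : ℕ, τ (-(N : ℤ)) = g N := by
    intro N
    rcases N with _ | N
    · rw [hg]; funext y; simp [hτ0]
    · rw [hg, ← hτneg]; simp
  intro N x
  obtain ⟨n, rfl | rfl⟩ := N.eq_nat_or_neg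
  · rcases n with _ | n
    · have e1 := hτpos 0
      have e2 := hτneg 0
      simp at e1 e2
      simp [hτ0, e1, e2, ha0, hb0]
    · have e1 : ((n + 1 : ℕ) : ℤ) + 1 = ((n + 2 : ℕ) : ℤ) := by push_cast; ring
      have e2 : ((n + 1 : ℕ) : ℤ) - 1 = (n : ℤ) := by push_cast; ring
      rw [e1, e2, ht, ht, ht]
      exact toda_half φ ψ hφ hψ a ha0 ha h hh n x
  · rcases n with _ | n
    · have e1 := hτpos 0
      have e2 := hτneg 0
      simp at e1 e2
      simp [hτ0, e1, e2, ha0, hb0]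
    · have e1 : -((n + 1 : ℕ) : ℤ) + 1 = -(n : ℤ) := by push_cast; ring
      have e2 : -((n + 1 : ℕ) : ℤ) - 1 = -((n + 2 : ℕ) : ℤ) := by push_cast; ring
      rw [e1, e2, hs, hs, hs]
      have := toda_half ψ φ hψ hφ b hb0 hb g hg n x
      rw [this]; ring
end

section
/- Let α ∈ ℂ and let φ, ψ : ℂ → ℂ be entire functions satisfying ψ''(x) = (2x − 2ψ(x)φ(x))·ψ(x), φ''(x) = (2x − 2ψ(x)φ(x))·φ(x), and φ'(x)ψ(x) − φ(x)ψ'(x) = 2α for all x ∈ ℂ. Define a_n, b_n by a_0 = φ, a_n = a_{n-1}' + ψ·(∑_{i+j=n-2, i,j≥0} a_i a_j), b_0 = ψ, b_n = b_{n-1}' + φ·(∑_{i+j=n-2, i,j≥0} b_i b_j), and for N ∈ ℤ let τ_N = det(a_{i+j})_{0≤i,j≤N-1} for N > 0, τ_0 = 1, τ_N = det(b_{i+j})_{0≤i,j≤|N|-1} for N < 0. Fix N ∈ ℤ and assume τ_N(x) ≠ 0 and τ_{N+1}(x) ≠ 0 for all x ∈ ℂ. Then u_N := τ_{N+1}'/τ_{N+1}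 − τ_N'/τ_N satisfies the Painlevé II equation with parameter α + N: u_N''(x) = 2u_N(x)³ − 4x·u_N(x) + 4(α + N + 1/2) for all x ∈ ℂ. -/
namespace PII

open Matrix

/-- Derivative of a determinant. -/
lemma der_det {R : Type*} [CommRing R] [Algebra ℂ R] (D : Derivation ℂ R R) {n : ℕ}
    (A : Matrix (Fin n) (Fin n) R) :
    D A.det = Matrix.trace (A.map D * A.adjugate) := by
  have hprod : ∀ (s : Finset (Fin n)) (f : Fin n → R),
      D (∏ i ∈ s, f i) = ∑ i ∈ s, D (f i) * ∏ j ∈ s.erase i, f j := by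
    intro s f
    induction s using Finset.induction_on with
    | empty => simp
    | insert i s hi ih =>
      rw [Finset.prod_insert hi, D.leibniz, ih, Finset.sum_insert hi, Finset.erase_insert hi]
      simp only [smul_eq_mul]
      rw [Finset.mul_sum, add_comm, mul_comm]
      congr 1
      apply Finset.sum_congr rfl
      intro j hj
      have hij : i ≠ j := fun h => hi (h ▸ hj)
      rw [Finset.erase_insert_of_ne hij, Finset.prod_insert (by simp [hi])]
      ring
  have h1 : Matrix.trace (A.map D * A.adjugate) = ∑ i, (A.updateRow i (fun j => D (A i j))).det := by
    simp only [Matrix.trace, Matrix.diag, Matrix.mul_apply, Matrix.map_apply]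
    apply Finset.sum_congr rfl
    intro i _
    rw [← Matrix.det_transpose, ← Matrix.updateCol_transpose, ← Matrix.cramer_apply,
      Matrix.cramer_eq_adjugate_mulVec, ← Matrix.adjugate_transpose]
    simp [Matrix.mulVec, dotProduct, mul_comm]
  rw [h1, ← Matrix.det_transpose]
  simp_rw [← Matrix.det_transpose (A.updateRow _ _)]
  simp only [Matrix.det_apply, map_sum, Matrix.transpose_apply]
  rw [Finset.sum_comm]
  apply Finset.sum_congr rfl
  intro σ _
  rw [← Finset.smul_sum]
  rw [show D (Equiv.Perm.sign σ • ∏ i, A i (σ i)) = Equiv.Perm.sign σ • D (∏ i, A i (σ i)) by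
    rcases Int.units_eq_one_or (Equiv.Perm.sign σ) with h | h <;> simp [h]]
  congr 1
  rw [hprod]
  apply Finset.sum_congr rfl
  intro i _
  rw [← Finset.mul_prod_erase _ _ (Finset.mem_univ i)]
  congr 1
  · simp
  · apply Finset.prod_congr rfl
    intro j hj
    rw [Matrix.updateRow_ne (Finset.ne_of_mem_erase hj)]

lemma trace_row {R : Type*} [CommRing R] {n : ℕ} (A B : Matrix (Fin n) (Fin n) R) :
    Matrix.trace (B * A.adjugate) = ∑ i, (A.updateRow i (B i)).det := by
  simp only [Matrix.trace, Matrix.diag, Matrix.mul_apply]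
  apply Finset.sum_congr rfl
  intro i _
  rw [← Matrix.det_transpose, ← Matrix.updateCol_transpose, ← Matrix.cramer_apply,
    Matrix.cramer_eq_adjugate_mulVec, ← Matrix.adjugate_transpose]
  simp [Matrix.mulVec, dotProduct, mul_comm]

lemma trace_left {R : Type*} [CommRing R] {n : ℕ} (A T : Matrix (Fin n) (Fin n) R)
    (hT : ∀ i, T i i = 0) : Matrix.trace (T * A * A.adjugate) = 0 := by
  rw [Matrix.mul_assoc, Matrix.mul_adjugate]
  simp [Matrix.trace, hT]

lemma trace_right {R : Type*} [CommRing R] {n : ℕ} (A T : Matrix (Fin n) (Fin n) R)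
    (hT : ∀ i, T i i = 0) : Matrix.trace (A * T * A.adjugate) = 0 := by
  rw [Matrix.trace_mul_comm, ← Matrix.mul_assoc, Matrix.adjugate_mul]
  simp [Matrix.trace, hT]

/-- The index function with the last index shifted. -/
def sh (k : ℕ) (i : Fin (k + 1)) : ℕ := if i.1 = k then k + 1 else i.1

/-- Minors of the Hankel matrix. -/
def mn {R : Type*} [CommRing R] (a : ℕ → R) {n : ℕ} (r c : Fin n → ℕ) : R :=
  (Matrix.of fun i j : Fin n => a (r i + c j)).det

lemma mn_symm {R : Type*} [CommRing R] (a : ℕ → R) {n : ℕ} (r c : Fin n → ℕ) :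
    mn a r c = mn a c r := by
  rw [mn, ← Matrix.det_transpose, mn]
  congr 1
  ext i j
  simp [add_comm]

lemma trace_shift {R : Type*} [CommRing R] (a : ℕ → R) {k : ℕ} (c : Fin (k + 1) → ℕ) :
    Matrix.trace ((Matrix.of fun i j : Fin (k + 1) => a (i.1 + c j + 1)) *
      (Matrix.of fun i j : Fin (k + 1) => a (i.1 + c j)).adjugate) = mn a (sh k) c := by
  rw [trace_row, Finset.sum_eq_single (Fin.last k)]
  · rw [mn]
    congr 1
    ext i j
    by_cases h : i = Fin.last k
    · subst h
      simp [sh]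
      congr 1; ring
    · have : i.1 ≠ k := fun h' => h (Fin.ext h')
      rw [Matrix.updateRow_ne h]
      simp [sh, this]
  · intro i _ hi
    have hi' : i.1 < k := lt_of_le_of_ne (Nat.le_of_lt_succ i.2) (fun h' => hi (Fin.ext h'))
    have hne : i ≠ ⟨i.1 + 1, by omega⟩ := by
      intro h; have := congrArg Fin.val h; simp at this
    apply Matrix.det_zero_of_row_eq hne
    ext j
    rw [Matrix.updateRow_self, Matrix.updateRow_ne hne.symm]
    simp only [Matrix.of_apply]
    congr 1; ring
  · simp

section
variable {R : Type*} [CommRing R] [Algebra ℂ R] (D : Derivation ℂ R R) (φ ψ : R) (a : ℕ → R)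

lemma sum_split (p q : ℕ) : ∑ m ∈ Finset.range (p + q), a m * a (p + q - 1 - m) =
    ∑ m ∈ Finset.range p, a (p - 1 - m) * a (m + q) +
    ∑ m ∈ Finset.range q, a (p + m) * a (q - 1 - m) := by
  rw [Finset.sum_range_add]
  congr 1
  · rw [← Finset.sum_range_reflect]
    apply Finset.sum_congr rfl
    intro m hm
    have := Finset.mem_range.1 hm
    congr 2; omega
  · apply Finset.sum_congr rfl
    intro m hm
    have := Finset.mem_range.1 hm
    congr 2; omega

lemma range_to_fin {n p : ℕ} (hp : p ≤ n) (f : ℕ → R) :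
    ∑ m ∈ Finset.range p, f m = ∑ m : Fin n, if m.1 < p then f m.1 else 0 := by
  rw [← Finset.sum_range (fun m => if m < p then f m else 0), ← Finset.sum_filter]
  apply Finset.sum_congr _ (fun _ _ => rfl)
  ext m
  simp only [Finset.mem_range, Finset.mem_filter]
  omega

lemma der_mn (ha : ∀ n : ℕ, a (n + 1) =
      D (a n) + ψ * ∑ k ∈ Finset.range n, a k * a (n - 1 - k)) {k : ℕ} (c : Fin (k + 1) → ℕ) :
    D (mn a Fin.val c) = mn a (sh k) c - ψ * Matrix.trace
      ((Matrix.of fun i j : Fin (k + 1) => ∑ m ∈ Finset.range (c j), a (i.1 + m) * a (c j - 1 - m)) *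
        (Matrix.of fun i j : Fin (k + 1) => a (i.1 + c j)).adjugate) := by
  rw [mn, der_det, ← trace_shift]
  set G : Matrix (Fin (k + 1)) (Fin (k + 1)) R := Matrix.of fun i j => a (i.1 + c j) with hG
  set L : Matrix (Fin (k + 1)) (Fin (k + 1)) R :=
    Matrix.of fun i m => if m.1 < i.1 then a (i.1 - 1 - m.1) else 0 with hL
  have hL0 := trace_left G L (by intro i; simp [hL])
  have key : G.map D = (Matrix.of fun i j : Fin (k + 1) => a (i.1 + c j + 1)) - ψ • (L * G) -
      ψ • (Matrix.of fun i j : Fin (k + 1) =>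
        ∑ m ∈ Finset.range (c j), a (i.1 + m) * a (c j - 1 - m)) := by
    ext i j
    simp only [hG, hL, Matrix.map_apply, Matrix.of_apply, Matrix.sub_apply, Matrix.smul_apply,
      Matrix.mul_apply, smul_eq_mul]
    rw [ha (i.1 + c j), sum_split, range_to_fin (n := k + 1) i.2.le]
    simp only [ite_mul, zero_mul]
    ring
  rw [key, Matrix.sub_mul, Matrix.sub_mul, Matrix.trace_sub, Matrix.trace_sub, Matrix.smul_mul,
    Matrix.smul_mul, Matrix.trace_smul, Matrix.trace_smul, hL0]
  simp

lemma der_tau (ha : ∀ n : ℕ, a (n + 1) =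
      D (a n) + ψ * ∑ k ∈ Finset.range n, a k * a (n - 1 - k)) (k : ℕ) :
    D (mn a (Fin.val : Fin (k + 1) → ℕ) Fin.val) = mn a (sh k) Fin.val := by
  rw [der_mn D ψ a ha]
  set G : Matrix (Fin (k + 1)) (Fin (k + 1)) R := Matrix.of fun i j => a (i.1 + j.1) with hG
  set T : Matrix (Fin (k + 1)) (Fin (k + 1)) R :=
    Matrix.of fun m j => if m.1 < j.1 then a (j.1 - 1 - m.1) else 0 with hT
  have hT0 := trace_right G T (by intro i; simp [hT])
  have key : (Matrix.of fun i j : Fin (k + 1) =>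
        ∑ m ∈ Finset.range j.1, a (i.1 + m) * a (j.1 - 1 - m)) = G * T := by
    ext i j
    simp only [hG, hT, Matrix.of_apply, Matrix.mul_apply]
    rw [range_to_fin (n := k + 1) j.2.le]
    simp only [mul_ite, mul_zero]
  rw [key, hT0]
  simp

lemma der_sh (ha : ∀ n : ℕ, a (n + 1) =
      D (a n) + ψ * ∑ k ∈ Finset.range n, a k * a (n - 1 - k)) (k : ℕ) :
    D (mn a Fin.val (sh k)) = mn a (sh k) (sh k) - ψ * a 0 *
      mn a (Fin.val : Fin (k + 1) → ℕ) Fin.val := by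
  rw [der_mn D ψ a ha]
  set G : Matrix (Fin (k + 1)) (Fin (k + 1)) R := Matrix.of fun i j => a (i.1 + sh k j) with hG
  set T : Matrix (Fin (k + 1)) (Fin (k + 1)) R :=
    Matrix.of fun m j => if m.1 < j.1 then a (sh k j - 1 - m.1) else 0 with hT
  set B : Matrix (Fin (k + 1)) (Fin (k + 1)) R :=
    Matrix.of fun i j => if j = Fin.last k then a (i.1 + k) else 0 with hB
  have hT0 := trace_right G T (by intro i; simp [hT])
  have hB0 : Matrix.trace (B * G.adjugate) = mn a (Fin.val : Fin (k + 1) → ℕ) Fin.val := by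
    have h1 : (G.updateCol (Fin.last k) (fun i => a (i.1 + k))).det =
        mn a (Fin.val : Fin (k + 1) → ℕ) Fin.val := by
      rw [mn]
      congr 1
      ext i j
      by_cases h : j = Fin.last k
      · subst h; simp
      · have : j.1 ≠ k := fun h' => h (Fin.ext h')
        rw [Matrix.updateCol_ne h]
        simp [hG, sh, this]
    rw [← h1, ← Matrix.cramer_apply, Matrix.cramer_eq_adjugate_mulVec]
    simp [Matrix.trace, Matrix.mul_apply, Matrix.mulVec, dotProduct, hB, mul_comm]
  have key : (Matrix.of fun i j : Fin (k + 1) =>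
        ∑ m ∈ Finset.range (sh k j), a (i.1 + m) * a (sh k j - 1 - m)) = G * T + a 0 • B := by
    ext i j
    simp only [hG, hT, hB, Matrix.of_apply, Matrix.mul_apply, Matrix.add_apply, Matrix.smul_apply,
      smul_eq_mul]
    have hsum : ∑ m ∈ Finset.range j.1, a (i.1 + m) * a (sh k j - 1 - m) =
        ∑ m : Fin (k + 1), a (i.1 + sh k m) * (if m.1 < j.1 then a (sh k j - 1 - m.1) else 0) := by
      rw [range_to_fin (n := k + 1) j.2.le]
      apply Finset.sum_congr rfl
      intro m _
      by_cases h : m.1 < j.1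
      · have : m.1 ≠ k := by omega
        simp [h, sh, this]
      · simp [h]
    rw [← hsum]
    by_cases h : j = Fin.last k
    · subst h
      simp [sh, Finset.sum_range_succ, mul_comm]
    · have : j.1 ≠ k := fun h' => h (Fin.ext h')
      simp [h, sh, this]
  rw [key, Matrix.add_mul, Matrix.trace_add, hT0, Matrix.smul_mul, Matrix.trace_smul, hB0]
  simp [mul_assoc]

end

lemma jacobi_field {K : Type*} [Field K] (a : ℕ → K) (k : ℕ)
    (h0 : mn a (Fin.val : Fin k → ℕ) Fin.val ≠ 0) :
    mn a (Fin.val : Fin (k + 2) → ℕ) Fin.val * mn a (Fin.val : Fin k → ℕ) Fin.val =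
      mn a (Fin.val : Fin (k + 1) → ℕ) Fin.val * mn a (sh k) (sh k) -
      mn a Fin.val (sh k) * mn a (sh k) Fin.val := by
  set A : Matrix (Fin k) (Fin k) K := Matrix.of fun i j => a (i.1 + j.1) with hA
  have hdet : A.det = mn a (Fin.val : Fin k → ℕ) Fin.val := rfl
  letI : Invertible A := Matrix.invertibleOfIsUnitDet A (by rw [hdet]; exact isUnit_iff_ne_zero.2 h0)
  let X : Matrix (Fin 2) (Fin 2) K := (Matrix.of fun i j : Fin 2 => a (k + i.1 + (k + j.1))) -
    (Matrix.of fun (i : Fin 2) (j : Fin k) => a (k + i.1 + j.1)) * ⅟A *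
    (Matrix.of fun (i : Fin k) (j : Fin 2) => a (i.1 + (k + j.1)))
  have h2 : mn a (Fin.val : Fin (k + 2) → ℕ) Fin.val = A.det * X.det := by
    rw [← Matrix.det_fromBlocks₁₁, mn, ← Matrix.det_submatrix_equiv_self finSumFinEquiv]
    congr 1
    ext i j
    rcases i with i | i <;> rcases j with j | j <;> simp [hA]
  have h1 : ∀ (p q : Fin 2) (r c : Fin (k + 1) → ℕ), (∀ i : Fin k, r i.castSucc = i.1) →
      (∀ i : Fin k, c i.castSucc = i.1) → r (Fin.last k) = k + p.1 → c (Fin.last k) = k + q.1 →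
      mn a r c = A.det * X p q := by
    intro p q r c hr hc hr' hc'
    have : X p q = ((Matrix.of fun i j : Fin 1 => a (k + p.1 + (k + q.1))) -
      (Matrix.of fun (i : Fin 1) (j : Fin k) => a (k + p.1 + j.1)) * ⅟A *
      (Matrix.of fun (i : Fin k) (j : Fin 1) => a (i.1 + (k + q.1)))).det := by
      rw [Matrix.det_fin_one]
      simp [X, Matrix.mul_apply]
    rw [this, ← Matrix.det_fromBlocks₁₁, mn, ← Matrix.det_submatrix_equiv_self finSumFinEquiv]
    have e1 : ∀ i : Fin k, Fin.castAdd 1 i = i.castSucc := fun _ => rfl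
    have e2 : ∀ i : Fin 1, Fin.natAdd k i = Fin.last k := by
      intro i; ext; simp
    congr 1
    ext i j
    rcases i with i | i <;> rcases j with j | j <;> simp [hA, e1, e2, hr, hc, hr', hc']
  have hs : ∀ i : Fin k, sh k i.castSucc = i.1 := by
    intro i
    have : i.1 ≠ k := by omega
    simp [sh, this]
  have hs' : sh k (Fin.last k) = k + 1 := by simp [sh]
  rw [h2, ← hdet, h1 0 0 Fin.val Fin.val (by simp) (by simp) (by simp) (by simp),
    h1 1 1 (sh k) (sh k) hs hs hs' hs', h1 0 1 Fin.val (sh k) (by simp) hs (by simp) hs',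
    h1 1 0 (sh k) Fin.val hs (by simp) hs' (by simp), Matrix.det_fin_two]
  ring

lemma map_mn {R S : Type*} [CommRing R] [CommRing S] (f : R →+* S) (a : ℕ → R) {n : ℕ}
    (r c : Fin n → ℕ) : f (mn a r c) = mn (fun i => f (a i)) r c := by
  rw [mn, RingHom.map_det, mn]
  congr 1

lemma jacobi {R : Type*} [CommRing R] [IsDomain R] (a : ℕ → R) (k : ℕ)
    (h0 : mn a (Fin.val : Fin k → ℕ) Fin.val ≠ 0) :
    mn a (Fin.val : Fin (k + 2) → ℕ) Fin.val * mn a (Fin.val : Fin k → ℕ) Fin.val =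
      mn a (Fin.val : Fin (k + 1) → ℕ) Fin.val * mn a (sh k) (sh k) -
      mn a Fin.val (sh k) * mn a (sh k) Fin.val := by
  have hi := IsFractionRing.injective R (FractionRing R)
  apply hi
  have := jacobi_field (fun i => algebraMap R (FractionRing R) (a i)) k (by
    rw [← map_mn]
    exact fun h => h0 (hi (by rw [h, map_zero])))
  simpa only [map_mul, map_sub, map_mn] using this



section
variable {R : Type*} [CommRing R] [Algebra ℂ R] (D : Derivation ℂ R R)

/-- Hankel determinant. -/
def hank {R : Type*} [CommRing R] (a : ℕ → R) (n : ℕ) : R := mn a (Fin.val : Fin n → ℕ) Fin.val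

lemma toda [IsDomain R] (ψ : R) (a : ℕ → R) (ha : ∀ n : ℕ, a (n + 1) =
      D (a n) + ψ * ∑ k ∈ Finset.range n, a k * a (n - 1 - k)) (k : ℕ) (h0 : hank a k ≠ 0) :
    D (D (hank a (k + 1))) * hank a (k + 1) - D (hank a (k + 1)) ^ 2
      + a 0 * ψ * hank a (k + 1) ^ 2 = hank a (k + 2) * hank a k := by
  have h1 := der_tau D ψ a ha k
  have h2 := der_sh D ψ a ha k
  have h3 := jacobi a k h0
  have h4 := mn_symm a (sh k) Fin.val
  simp only [hank]
  rw [h1, h3, h4, h2]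
  ring

lemma stepA [IsDomain R] (x w c f g h : R) (hf : f ≠ 0) (hc : D c = 0)
    (e2 : D (D g) * f - 2 * D g * D f + g * D (D f) = (2 * x - 2 * w) * g * f)
    (e3 : D h * f - h * D f = c * g ^ 2) :
    D (D h) * g - 2 * D h * D g + h * D (D g) = (2 * x - 2 * w) * h * g := by
  have d3 := congrArg D e3
  simp only [map_sub, Derivation.leibniz, Derivation.leibniz_pow, smul_eq_mul, hc, nsmul_eq_mul] at d3
  apply mul_left_cancel₀ hf
  push_cast at d3
  linear_combination g * d3 + h * e2 - 2 * D g * e3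

lemma stepB [IsDomain R] (x w c f g h k : R) (hg : g ≠ 0) (hx : D x = 1)
    (e1 : D (D g) * g - D g ^ 2 + w * g ^ 2 = h * f)
    (e2 : D (D h) * g - 2 * D h * D g + h * D (D g) = (2 * x - 2 * w) * h * g)
    (e3 : D h * f - h * D f = c * g ^ 2)
    (e4 : D (D h) * h - D h ^ 2 + w * h ^ 2 = k * g) :
    D k * g - k * D g = (c + 2) * h ^ 2 := by
  have d1 := congrArg D e1
  have d2 := congrArg D e2
  have d4 := congrArg D e4
  have two : D (2 : R) = 0 := by exact_mod_cast D.map_natCast 2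
  simp only [map_sub, map_add, Derivation.leibniz, Derivation.leibniz_pow, smul_eq_mul,
    nsmul_eq_mul, hx, two] at d1 d2 d4
  push_cast at d1 d2 d4
  apply mul_left_cancel₀ (pow_ne_zero 2 hg)
  linear_combination -g ^ 2 * d4 + 2 * g * D g * e4 + h * g * d2 - h ^ 2 * d1
    - (D h * g + h * D g) * e2 + 2 * h * D h * e1 + h ^ 2 * e3

lemma hank_zero (a : ℕ → R) : hank a 0 = 1 := by simp [hank, mn]

lemma hank_one (a : ℕ → R) : hank a 1 = a 0 := by simp [hank, mn]

theorem main_alg [IsDomain R] (x φ ψ α : R) (a : ℕ → R) (hx : D x = 1) (hα : D α = 0)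
    (hφ : D (D φ) = (2 * x - 2 * (φ * ψ)) * φ)
    (hW : D φ * ψ - φ * D ψ = 2 * α) (hα' : ∀ n : ℕ, 2 * (α + n) ≠ 0)
    (ha0 : a 0 = φ) (ha : ∀ n : ℕ, a (n + 1) =
      D (a n) + ψ * ∑ k ∈ Finset.range n, a k * a (n - 1 - k)) (n : ℕ) :
    hank a n ≠ 0 ∧ hank a (n + 1) ≠ 0 ∧
    D (D (hank a (n + 1))) * hank a n - 2 * D (hank a (n + 1)) * D (hank a n)
      + hank a (n + 1) * D (D (hank a n)) = (2 * x - 2 * (φ * ψ)) * hank a (n + 1) * hank a n ∧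
    D (hank a (n + 2)) * hank a n - hank a (n + 2) * D (hank a n) =
      (2 * (α + (n + 1))) * hank a (n + 1) ^ 2 ∧
    D (D (hank a (n + 1))) * hank a (n + 1) - D (hank a (n + 1)) ^ 2
      + φ * ψ * hank a (n + 1) ^ 2 = hank a (n + 2) * hank a n := by
  have two : D (2 : R) = 0 := by exact_mod_cast D.map_natCast 2
  have T := toda D ψ a ha
  rw [ha0] at T
  induction n with
  | zero =>
    have hφ0 : φ ≠ 0 := by
      rintro rfl
      apply hα' 0
      simp at hW
      simpa using hW
    have e2 : D (D (hank a 1)) * hank a 0 - 2 * D (hank a 1) * D (hank a 0)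
      + hank a 1 * D (D (hank a 0)) = (2 * x - 2 * (φ * ψ)) * hank a 1 * hank a 0 := by
      rw [hank_zero, hank_one, ha0, hφ]; simp
    have h0 : hank a 0 ≠ 0 := by rw [hank_zero]; exact one_ne_zero
    have t0 := T 0 h0
    refine ⟨h0, by rw [hank_one, ha0]; exact hφ0, e2, ?_, t0⟩
    have := stepB D x (φ * ψ) (2 * α) ψ (hank a 0) (hank a 1) (hank a 2) h0 hx
      (by rw [hank_zero, hank_one, ha0]; simp) e2
      (by rw [hank_zero, hank_one, ha0, hW]; simp) t0
    simp only [zero_add]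
    rw [this]
    push_cast; ring
  | succ n ih =>
    obtain ⟨h0, h1, e2, e3, e1⟩ := ih
    have h2 : hank a (n + 1 + 1) ≠ 0 := by
      intro h
      rw [show n + 2 = n + 1 + 1 from rfl, h] at e3
      simp only [map_zero, zero_mul, sub_zero] at e3
      have := mul_ne_zero (hα' (n + 1)) (pow_ne_zero 2 h1)
      push_cast at this
      exact this e3.symm
    have hc : D (2 * (α + (n + 1))) = 0 := by
      simp [Derivation.leibniz, two, hα]
    have e2' := stepA D x (φ * ψ) (2 * (α + (n + 1))) (hank a n) (hank a (n + 1))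
      (hank a (n + 2)) h0 hc e2 e3
    have e4 := T (n + 1) h1
    refine ⟨h1, h2, e2', ?_, e4⟩
    have := stepB D x (φ * ψ) (2 * (α + (n + 1))) (hank a n) (hank a (n + 1))
      (hank a (n + 2)) (hank a (n + 3)) h1 hx e1 e2' e3 e4
    rw [show n + 1 + 2 = n + 3 from rfl, show n + 1 + 1 = n + 2 from rfl, this]
    push_cast; ring

/-- The sequence `a_n` in a differential ring. -/
def seqA (φ ψ : R) : ℕ → R
  | 0 => φ
  | n + 1 => D (seqA φ ψ n) + ψ * ∑ k : Fin n, seqA φ ψ k.1 * seqA φ ψ (n - 1 - k.1)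
decreasing_by all_goals omega

lemma seqA_zero (φ ψ : R) : seqA D φ ψ 0 = φ := by rw [seqA]

lemma seqA_succ (φ ψ : R) (n : ℕ) : seqA D φ ψ (n + 1) = D (seqA D φ ψ n) +
    ψ * ∑ k ∈ Finset.range n, seqA D φ ψ k * seqA D φ ψ (n - 1 - k) := by
  rw [seqA, Finset.sum_range]

end

/-- The universal differential ring. -/
abbrev A5 := MvPolynomial (Fin 5) ℂ

open MvPolynomial in
/-- Values of the derivation on the five generators. -/
noncomputable def gen5 : Fin 5 → A5 :=
  ![1, X 2, (2 * X 0 - 2 * (X 1 * X 3)) * X 1, X 4, (2 * X 0 - 2 * (X 1 * X 3)) * X 3]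

/-- The derivation. -/
noncomputable def D5 : Derivation ℂ A5 A5 := MvPolynomial.mkDerivation ℂ gen5

open MvPolynomial in
/-- The universal parameter. -/
noncomputable def al5 : A5 := C (1 / 2) * (X 2 * X 3 - X 1 * X 4)

open MvPolynomial

lemma D5_0 : D5 (X 0) = 1 := by simp [D5, mkDerivation_X, gen5]
lemma D5_1 : D5 (X 1) = X 2 := by simp [D5, mkDerivation_X, gen5]
lemma D5_2 : D5 (X 2) = (2 * X 0 - 2 * (X 1 * X 3)) * X 1 := by simp [D5, mkDerivation_X, gen5]
lemma D5_3 : D5 (X 3) = X 4 := by simp [D5, mkDerivation_X, gen5]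
lemma D5_4 : D5 (X 4) = (2 * X 0 - 2 * (X 1 * X 3)) * X 3 := by simp [D5, mkDerivation_X, gen5]

lemma two_al5 : 2 * al5 = X 2 * X 3 - X 1 * X 4 := by
  have : (2 : A5) * C (1 / 2) = 1 := by
    rw [show (2 : A5) = C 2 from (map_ofNat C 2).symm, ← C_mul]; norm_num
  rw [al5, ← mul_assoc, this, one_mul]

lemma D5_al : D5 al5 = 0 := by
  have hC : D5 (C (1 / 2)) = 0 := D5.map_algebraMap _
  simp only [al5, Derivation.leibniz, map_sub, D5_1, D5_2, D5_3, D5_4, hC, smul_eq_mul]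
  ring

lemma al5_ne (n : ℕ) : 2 * (al5 + n) ≠ 0 := by
  intro h
  have h' : (X 2 * X 3 - X 1 * X 4 : A5) + 2 * n = 0 := by rw [← h, ← two_al5]; ring
  have := congrArg (eval (![0, 0, 1, 1, 0] : Fin 5 → ℂ)) h'
  simp at this
  have h2 : ((1 + 2 * n : ℕ) : ℂ) = 0 := by push_cast; exact this
  have := Nat.cast_eq_zero.1 h2
  omega

lemma nal5_ne (n : ℕ) : 2 * (-al5 + n) ≠ 0 := by
  intro h
  have h' : -(X 2 * X 3 - X 1 * X 4 : A5) + 2 * n = 0 := by rw [← h, ← two_al5]; ring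
  have := congrArg (eval (![0, 1, 0, 0, 1] : Fin 5 → ℂ)) h'
  simp at this
  have h2 : ((1 + 2 * n : ℕ) : ℂ) = 0 := by push_cast; exact this
  have := Nat.cast_eq_zero.1 h2
  omega

/-- Realisation of elements of the universal ring as functions. -/
noncomputable def ev (φ ψ : ℂ → ℂ) (z : ℂ) : A5 →+* ℂ :=
  eval (![z, φ z, deriv φ z, ψ z, deriv ψ z] : Fin 5 → ℂ)


lemma ev_deriv {φ ψ : ℂ → ℂ} (hφ : Differentiable ℂ φ) (hψ : Differentiable ℂ ψ)
    (hψ'' : ∀ x : ℂ, deriv (deriv ψ) x = (2 * x - 2 * ψ x * φ x) * ψ x)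
    (hφ'' : ∀ x : ℂ, deriv (deriv φ) x = (2 * x - 2 * ψ x * φ x) * φ x)
    (p : A5) (z : ℂ) : HasDerivAt (fun z => ev φ ψ z p) (ev φ ψ z (D5 p)) z := by
  have hd : ∀ f : ℂ → ℂ, Differentiable ℂ f → ∀ z, HasDerivAt (deriv f) (deriv (deriv f) z) z := by
    intro f hf z
    have : DifferentiableOn ℂ (deriv f) Set.univ := (hf.differentiableOn).deriv isOpen_univ
    exact ((this z (Set.mem_univ z)).differentiableAt Filter.univ_mem).hasDerivAt
  induction p using MvPolynomial.induction_on with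
  | C c =>
    have : D5 (C c) = 0 := D5.map_algebraMap _
    simp only [this, map_zero]
    simpa [ev] using hasDerivAt_const z c
  | add p q hp hq => simpa only [map_add] using hp.fun_add hq
  | mul_X p i hp =>
    have hX : HasDerivAt (fun z => ev φ ψ z (X i)) (ev φ ψ z (D5 (X i))) z := by
      fin_cases i
      · simpa [ev, D5_0] using hasDerivAt_id' z
      · simpa [ev, D5_1] using (hφ z).hasDerivAt
      · have := hd φ hφ z
        rw [hφ''] at this
        simp only [Fin.reduceFinMk, D5_2]
        simp [ev]
        convert this using 1; ring
      · simpa [ev, D5_3] using (hψ z).hasDerivAt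
      · have := hd ψ hψ z
        rw [hψ''] at this
        simp only [Fin.reduceFinMk, D5_4]
        simp [ev]
        convert this using 1; ring
    simp only [map_mul, Derivation.leibniz, smul_eq_mul, map_add]
    refine (hp.fun_mul hX).congr_deriv ?_
    ring

lemma final_calc {φ ψ : ℂ → ℂ} (hφ : Differentiable ℂ φ) (hψ : Differentiable ℂ ψ)
    (hψ'' : ∀ x : ℂ, deriv (deriv ψ) x = (2 * x - 2 * ψ x * φ x) * ψ x)
    (hφ'' : ∀ x : ℂ, deriv (deriv φ) x = (2 * x - 2 * ψ x * φ x) * φ x)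
    (α : ℂ) (hW : ∀ x : ℂ, deriv φ x * ψ x - φ x * deriv ψ x = 2 * α) (N : ℤ)
    (f g h : A5) (G H : ℂ → ℂ) (hG : G = fun z => ev φ ψ z g) (hH : H = fun z => ev φ ψ z h)
    (hG0 : ∀ x, G x ≠ 0) (hH0 : ∀ x, H x ≠ 0)
    (e1 : D5 (D5 g) * g - D5 g ^ 2 + X 1 * X 3 * g ^ 2 = h * f)
    (e2 : D5 (D5 h) * g - 2 * D5 h * D5 g + h * D5 (D5 g) =
      (2 * X 0 - 2 * (X 1 * X 3)) * h * g)
    (e3 : D5 h * f - h * D5 f = 2 * (al5 + N) * g ^ 2) (x : ℂ) :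
    deriv (deriv (fun y => deriv H y / H y - deriv G y / G y)) x =
        2 * (deriv H x / H x - deriv G x / G x) ^ 3
          - 4 * x * (deriv H x / H x - deriv G x / G x)
          + 4 * (α + (N : ℂ) + 1 / 2) := by
  have hd := ev_deriv hφ hψ hψ'' hφ''
  subst hG hH
  have dG : ∀ p : A5, deriv (fun z => ev φ ψ z p) = fun z => ev φ ψ z (D5 p) := by
    intro p; ext z; exact (hd p z).deriv
  simp only [dG]
  have E1 : ∀ z, ev φ ψ z (D5 (D5 g)) * ev φ ψ z g - ev φ ψ z (D5 g) ^ 2 +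
      φ z * ψ z * ev φ ψ z g ^ 2 = ev φ ψ z h * ev φ ψ z f := by
    intro z
    have := congrArg (ev φ ψ z) e1
    simp only [map_add, map_sub, map_mul, map_pow] at this
    rw [← this]; simp [ev]
  have E2 : ∀ z, ev φ ψ z (D5 (D5 h)) * ev φ ψ z g - 2 * ev φ ψ z (D5 h) * ev φ ψ z (D5 g) +
      ev φ ψ z h * ev φ ψ z (D5 (D5 g)) =
      (2 * z - 2 * (φ z * ψ z)) * ev φ ψ z h * ev φ ψ z g := by
    intro z
    have := congrArg (ev φ ψ z) e2
    simp only [map_add, map_sub, map_mul, map_pow, map_ofNat] at this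
    rw [this]; simp [ev]
  have E3 : ∀ z, ev φ ψ z (D5 h) * ev φ ψ z f - ev φ ψ z h * ev φ ψ z (D5 f) =
      2 * (α + N) * ev φ ψ z g ^ 2 := by
    intro z
    have hal : ev φ ψ z al5 = α := by
      have h1 := congrArg (ev φ ψ z) two_al5
      simp only [map_sub, map_mul, map_ofNat] at h1
      have h2 := hW z
      simp [ev] at h1
      simp only [ev]
      linear_combination (1 / 2 : ℂ) * h1 + (1 / 2 : ℂ) * h2
    have := congrArg (ev φ ψ z) e3
    simp only [map_add, map_sub, map_mul, map_pow, map_ofNat, hal, map_intCast] at this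
    exact this
  have U : ∀ z, HasDerivAt (fun y => ev φ ψ y (D5 h) / ev φ ψ y h - ev φ ψ y (D5 g) / ev φ ψ y g)
      (2 * z - (ev φ ψ z (D5 h) / ev φ ψ z h - ev φ ψ z (D5 g) / ev φ ψ z g) ^ 2
        - 2 * (ev φ ψ z h * ev φ ψ z f / ev φ ψ z g ^ 2)) z := by
    intro z
    have hg := hG0 z
    have hh := hH0 z
    simp only at hg hh
    have := ((hd (D5 h) z).fun_div (hd h z) hh).fun_sub ((hd (D5 g) z).fun_div (hd g z) hg)
    refine this.congr_deriv ?_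
    have a1 := E1 z
    have a2 := E2 z
    field_simp
    linear_combination ((ev φ ψ z h) * ev φ ψ z g) * a2 - 2 * (ev φ ψ z h) ^ 2 * a1
  have U' : deriv (fun y => ev φ ψ y (D5 h) / ev φ ψ y h - ev φ ψ y (D5 g) / ev φ ψ y g) =
      fun z => (2 * z - (ev φ ψ z (D5 h) / ev φ ψ z h - ev φ ψ z (D5 g) / ev φ ψ z g) ^ 2
        - 2 * (ev φ ψ z h * ev φ ψ z f / ev φ ψ z g ^ 2)) := by
    ext z; exact (U z).deriv
  rw [U']
  have hg := hG0 x
  have hh := hH0 x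
  simp only at hg hh
  have V := ((((hasDerivAt_id' x).const_mul 2).fun_sub ((U x).fun_pow 2)).fun_sub
    ((((hd h x).fun_mul (hd f x)).fun_div ((hd g x).fun_pow 2) (pow_ne_zero 2 hg)).const_mul 2)).deriv
  rw [V]
  have a3 := E3 x
  push_cast
  simp only [show 2 - 1 = 1 from rfl, pow_one]
  set h0 := ev φ ψ x h
  set h1 := ev φ ψ x (D5 h)
  set g0 := ev φ ψ x g
  set g1 := ev φ ψ x (D5 g)
  set f0 := ev φ ψ x f
  set f1 := ev φ ψ x (D5 f)
  have key : ((h1 * f0 + h0 * f1) * g0 ^ 2 - h0 * f0 * (2 * g0 * g1)) / (g0 ^ 2) ^ 2 =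
      2 * (h1 / h0 - g1 / g0) * (h0 * f0 / g0 ^ 2) - 2 * (α + N) := by
    field_simp
    linear_combination -g0 * a3
  rw [key]
  ring

end PII


/-- **Proposition 2.2 (iii).** Under the conditions `ψ''/ψ = φ''/φ = −2ψφ + 2x`
and `φ'ψ − φψ' = 2α`, the function `u_N = (log(τ_{N+1}/τ_N))' = τ_{N+1}'/τ_{N+1} − τ_N'/τ_N`,
where `τ_N` is the Hankel determinant built from the recursively defined `a_n, b_n`,
satisfies Painlevé II with parameter `α + N`. -/
theorem uN_satisfies_painleveII
    (α : ℂ) (φ ψ : ℂ → ℂ) (hφ : Differentiable ℂ φ) (hψ : Differentiable ℂ ψ)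
    (hψ'' : ∀ x : ℂ, deriv (deriv ψ) x = (2 * x - 2 * ψ x * φ x) * ψ x)
    (hφ'' : ∀ x : ℂ, deriv (deriv φ) x = (2 * x - 2 * ψ x * φ x) * φ x)
    (hW : ∀ x : ℂ, deriv φ x * ψ x - φ x * deriv ψ x = 2 * α)
    (a b : ℕ → ℂ → ℂ)
    (ha0 : a 0 = φ)
    (ha : ∀ n : ℕ, a (n + 1) =
      deriv (a n) + fun x => ψ x * ∑ k ∈ Finset.range n, a k x * a (n - 1 - k) x)
    (hb0 : b 0 = ψ)
    (hb : ∀ n : ℕ, b (n + 1) =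
      deriv (b n) + fun x => φ x * ∑ k ∈ Finset.range n, b k x * b (n - 1 - k) x)
    (τ : ℤ → ℂ → ℂ)
    (hτpos : ∀ N : ℕ, τ ((N : ℤ) + 1) =
      fun x => (Matrix.of fun i j : Fin (N + 1) => a (i.1 + j.1) x).det)
    (hτ0 : τ 0 = 1)
    (hτneg : ∀ N : ℕ, τ (-((N : ℤ) + 1)) =
      fun x => (Matrix.of fun i j : Fin (N + 1) => b (i.1 + j.1) x).det)
    (N : ℤ)
    (hτN : ∀ x : ℂ, τ N x ≠ 0) (hτN1 : ∀ x : ℂ, τ (N + 1) x ≠ 0) :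
    ∀ x : ℂ,
      deriv (deriv (fun y => deriv (τ (N + 1)) y / τ (N + 1) y - deriv (τ N) y / τ N y)) x =
        2 * (deriv (τ (N + 1)) x / τ (N + 1) x - deriv (τ N) x / τ N x) ^ 3
          - 4 * x * (deriv (τ (N + 1)) x / τ (N + 1) x - deriv (τ N) x / τ N x)
          + 4 * (α + (N : ℂ) + 1 / 2) := by
  have hd := PII.ev_deriv hφ hψ hψ'' hφ''
  have key : ∀ (p q : PII.A5) (P Q : ℂ → ℂ) (s : ℕ → ℂ → ℂ),
      (∀ z, PII.ev φ ψ z p = P z) → (∀ z, PII.ev φ ψ z q = Q z) → s 0 = P →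
      (∀ n : ℕ, s (n + 1) =
        deriv (s n) + fun x => Q x * ∑ k ∈ Finset.range n, s k x * s (n - 1 - k) x) →
      ∀ n z, PII.ev φ ψ z (PII.hank (PII.seqA PII.D5 p q) n) =
        (Matrix.of fun i j : Fin n => s (i.1 + j.1) z).det := by
    intro p q P Q s hp hq hs0 hs n z
    have hseq : ∀ n, ∀ z, PII.ev φ ψ z (PII.seqA PII.D5 p q n) = s n z := by
      intro n
      induction n using Nat.strong_induction_on with
      | _ n ih =>
        intro z
        rcases n with _ | n
        · rw [PII.seqA_zero, hs0, hp]
        · have e : s n = fun z => PII.ev φ ψ z (PII.seqA PII.D5 p q n) := by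
            ext w; rw [ih n (Nat.lt_succ_self n)]
          rw [PII.seqA_succ, hs, Pi.add_apply, e, (hd _ z).deriv, map_add, map_mul, hq, map_sum]
          congr 2
          apply Finset.sum_congr rfl
          intro k hk
          have := Finset.mem_range.1 hk
          rw [map_mul, ih k (by omega), ih (n - 1 - k) (by omega)]
    rw [PII.hank, PII.map_mn, PII.mn]
    simp only [hseq]
  have evφ : ∀ z, PII.ev φ ψ z (MvPolynomial.X 1) = φ z := by intro z; simp [PII.ev]
  have evψ : ∀ z, PII.ev φ ψ z (MvPolynomial.X 3) = ψ z := by intro z; simp [PII.ev]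
  have Ka := key (MvPolynomial.X 1) (MvPolynomial.X 3) φ ψ a evφ evψ ha0 ha
  have Kb := key (MvPolynomial.X 3) (MvPolynomial.X 1) ψ φ b evψ evφ hb0 hb
  set sa := PII.seqA PII.D5 (MvPolynomial.X 1) (MvPolynomial.X 3) with hsa
  set sb := PII.seqA PII.D5 (MvPolynomial.X 3) (MvPolynomial.X 1) with hsb
  have Ma := PII.main_alg PII.D5 (MvPolynomial.X 0) (MvPolynomial.X 1) (MvPolynomial.X 3) PII.al5
    sa PII.D5_0 PII.D5_al (by rw [PII.D5_1, PII.D5_2])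
    (by rw [PII.D5_1, PII.D5_3, PII.two_al5]) PII.al5_ne
    (PII.seqA_zero _ _ _) (PII.seqA_succ _ _ _)
  have Mb := PII.main_alg PII.D5 (MvPolynomial.X 0) (MvPolynomial.X 3) (MvPolynomial.X 1) (-PII.al5)
    sb PII.D5_0 (by rw [map_neg, PII.D5_al, neg_zero])
    (by rw [PII.D5_3, PII.D5_4]; ring)
    (by rw [PII.D5_1, PII.D5_3, mul_neg, PII.two_al5]; ring) PII.nal5_ne
    (PII.seqA_zero _ _ _) (PII.seqA_succ _ _ _)
  have Ta : ∀ n : ℕ, τ n = fun z => PII.ev φ ψ z (PII.hank sa n) := by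
    intro n
    rcases n with _ | n
    · ext z; simp [hτ0, PII.hank_zero]
    · ext z; rw [Ka]; push_cast; rw [hτpos]
  have Tb : ∀ n : ℕ, τ (-(n : ℤ)) = fun z => PII.ev φ ψ z (PII.hank sb n) := by
    intro n
    rcases n with _ | n
    · ext z; simp [hτ0, PII.hank_zero]
    · ext z; rw [Kb]; push_cast; rw [hτneg]
  have fin := PII.final_calc hφ hψ hψ'' hφ'' α hW N
  have cases : N = 0 ∨ (∃ n : ℕ, N = n + 1) ∨ ∃ n : ℕ, N = -((n : ℤ) + 1) := by
    rcases lt_trichotomy N 0 with h | h | h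
    · exact Or.inr (Or.inr ⟨(-N - 1).toNat, by omega⟩)
    · exact Or.inl h
    · exact Or.inr (Or.inl ⟨(N - 1).toNat, by omega⟩)
  rcases cases with rfl | ⟨n, rfl⟩ | ⟨n, rfl⟩
  · refine fin (MvPolynomial.X 3) 1 (MvPolynomial.X 1) (τ 0) (τ (0 + 1)) ?_ ?_ hτN hτN1 ?_ ?_ ?_
    · ext z; simp [hτ0]
    · have := Ta 1
      rw [PII.hank_one, hsa, PII.seqA_zero] at this
      simpa using this
    · simp
    · rw [PII.D5_1, PII.D5_2]; simp
    · rw [PII.D5_1, PII.D5_3]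
      simp [PII.two_al5]
  · obtain ⟨-, -, -, e3, e1⟩ := Ma n
    obtain ⟨-, -, e2, -, -⟩ := Ma (n + 1)
    refine fin (PII.hank sa n) (PII.hank sa (n + 1)) (PII.hank sa (n + 2)) _ _ ?_ ?_ hτN hτN1 e1 e2 ?_
    · rw [← Ta]; push_cast; rfl
    · rw [← Ta]; push_cast; ring_nf
    · rw [e3]; push_cast; ring
  · obtain ⟨-, -, e2, e3, e1⟩ := Mb n
    refine fin (PII.hank sb (n + 2)) (PII.hank sb (n + 1)) (PII.hank sb n) _ _ ?_ ?_ hτN hτN1 ?_ ?_ ?_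
    · rw [← Tb]; push_cast; rfl
    · rw [← Tb]; congr 1; ring
    · linear_combination e1
    · linear_combination e2
    · push_cast; linear_combination -e3
end

section
/- Let α ∈ ℂ and let φ, ψ : ℂ → ℂ be entire functions satisfying ψ''(x) = (2x − 2ψ(x)φ(x))·ψ(x), φ''(x) = (2x − 2ψ(x)φ(x))·φ(x), and φ'(x)ψ(x) − φ(x)ψ'(x) = 2α for all x ∈ ℂ. Define a_n, b_n by a_0 = φ, a_n = a_{n-1}' + ψ·(∑_{i+j=n-2, i,j≥0} a_i a_j), b_0 = ψ, b_n = b_{n-1}' + φ·(∑_{i+j=n-2, i,j≥0} b_i b_j). Then for every n ≥ 0 and all x ∈ ℂ: (ψ·a_{n+2} − ψ'·a_{n+1})'(x) = 2(n+1)·ψ(x)·a_n(x), and (φ·b_{n+2} − φ'·b_{n+1})'(x) = 2(n+1)·φ(x)·b_n(x). -/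
open PowerSeries in
/-- coefficientwise derivative of a family of power series -/
def HasD (F : ℂ → PowerSeries ℂ) (F' : PowerSeries ℂ) (x : ℂ) : Prop :=
  ∀ n, HasDerivAt (fun y => coeff n (F y)) (coeff n F') x

namespace HasD
open PowerSeries

theorem add {F G : ℂ → PowerSeries ℂ} {F' G' : PowerSeries ℂ} {x : ℂ}
    (hF : HasD F F' x) (hG : HasD G G' x) : HasD (fun y => F y + G y) (F' + G') x := by
  intro n
  simpa using (hF n).fun_add (hG n)

theorem sub {F G : ℂ → PowerSeries ℂ} {F' G' : PowerSeries ℂ} {x : ℂ}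
    (hF : HasD F F' x) (hG : HasD G G' x) : HasD (fun y => F y - G y) (F' - G') x := by
  intro n
  simpa using (hF n).fun_sub (hG n)

theorem mul {F G : ℂ → PowerSeries ℂ} {F' G' : PowerSeries ℂ} {x : ℂ}
    (hF : HasD F F' x) (hG : HasD G G' x) :
    HasD (fun y => F y * G y) (F' * G x + F x * G') x := by
  intro n
  simp only [coeff_mul, map_add, ← Finset.sum_add_distrib]
  exact HasDerivAt.fun_sum fun p _ => (hF p.1).mul (hG p.2)

theorem const (F : PowerSeries ℂ) (x : ℂ) : HasD (fun _ => F) 0 x := by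
  intro n
  simpa using hasDerivAt_const x (coeff n F)

theorem C {f : ℂ → ℂ} {f' x : ℂ} (hf : HasDerivAt f f' x) :
    HasD (fun y => PowerSeries.C (f y)) (PowerSeries.C f') x := by
  intro n
  simp only [coeff_C]
  split_ifs
  · exact hf
  · exact hasDerivAt_const x 0

theorem dX {F : ℂ → PowerSeries ℂ} {F' : PowerSeries ℂ} {x : ℂ}
    (hF : HasD F F' x) : HasD (fun y => derivative ℂ (F y)) (derivative ℂ F') x := by
  intro n
  simp only [coeff_derivative]
  exact (hF (n+1)).mul_const _

end HasD

open PowerSeries in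
theorem aux_half (φ ψ : ℂ → ℂ) (hφ : Differentiable ℂ φ) (hψ : Differentiable ℂ ψ)
    (hψ'' : ∀ x : ℂ, deriv (deriv ψ) x = (2 * x - 2 * ψ x * φ x) * ψ x)
    (hφ'' : ∀ x : ℂ, deriv (deriv φ) x = (2 * x - 2 * ψ x * φ x) * φ x)
    (a : ℕ → ℂ → ℂ)
    (ha0 : a 0 = φ)
    (ha : ∀ n : ℕ, a (n + 1) =
      deriv (a n) + fun x => ψ x * ∑ k ∈ Finset.range n, a k x * a (n - 1 - k) x)
    (n : ℕ) (x : ℂ) :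
      deriv (fun y => ψ y * a (n + 2) y - deriv ψ y * a (n + 1) y) x
          = 2 * ((n : ℂ) + 1) * ψ x * a n x := by
  have dd : ∀ f : ℂ → ℂ, Differentiable ℂ f → Differentiable ℂ (deriv f) := fun f hf =>
    differentiableOn_univ.1 (hf.differentiableOn.deriv isOpen_univ)
  have hda : ∀ n, Differentiable ℂ (a n) := by
    intro n
    induction n using Nat.strong_induction_on with
    | _ n ih =>
      cases n with
      | zero => rw [ha0]; exact hφ
      | succ n =>
        rw [ha n]
        refine (dd _ (ih n (by omega))).add (hψ.mul ?_)
        refine Differentiable.fun_sum fun k hk => ?_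
        have := Finset.mem_range.1 hk
        exact (ih k (by omega)).mul (ih _ (by omega))
  let G : ℂ → PowerSeries ℂ := fun y => PowerSeries.mk fun n => a n y
  let G' : ℂ → PowerSeries ℂ := fun y => PowerSeries.mk fun n => deriv (a n) y
  have hG : ∀ y, HasD G (G' y) y := by
    intro y n
    simpa [G, G'] using (hda n y).hasDerivAt
  have hGx : ∀ y, X * G' y = G y - C (φ y) - X ^ 2 * C (ψ y) * G y ^ 2 := by
    intro y
    ext n
    have e : X ^ 2 * C (ψ y) * G y ^ 2 = X * (X * (C (ψ y) * (G y * G y))) := by ring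
    rw [e, map_sub, map_sub]
    rcases n with _ | _ | n
    · simp [G, ha0]
    · simp [coeff_succ_X_mul, G, G', coeff_C, ha]
    · simp only [coeff_succ_X_mul, coeff_C_mul]
      rw [coeff_mul]
      rw [Finset.Nat.sum_antidiagonal_eq_sum_range_succ_mk]
      simp [G, G', ha (n+1), coeff_C]
  have hGt : ∀ y, G' y + X * derivative ℂ (G' y) = derivative ℂ (G y)
      - 2 * X * C (ψ y) * G y ^ 2 - 2 * X ^ 2 * C (ψ y) * G y * derivative ℂ (G y) := by
    intro y
    have h := congrArg (derivative ℂ) (hGx y)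
    simp only [Derivation.leibniz, map_sub, derivative_C, derivative_X, smul_eq_mul,
      Derivation.leibniz_pow, pow_two] at h
    linear_combination h
  let q : ℂ → ℂ := fun y => 2 * y - 2 * ψ y * φ y
  let R : ℂ → PowerSeries ℂ := fun y => G y - C (φ y) - X * C (deriv φ y)
    - X ^ 2 * (C (q y) * G y) - X ^ 2 * (C (ψ y) * (G y * G y))
    + X ^ 3 * (C (deriv ψ y) * (G y * G y)) - 2 * X ^ 3 * (G y + X * derivative ℂ (G y))
  have hq : ∀ y, HasDerivAt q (2 - 2 * (deriv ψ y * φ y + ψ y * deriv φ y)) y := by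
    intro y
    have h := ((hasDerivAt_id y).const_mul (2:ℂ)).sub
      (((hψ y).hasDerivAt.mul (hφ y).hasDerivAt).const_mul (2:ℂ))
    have e : q = (fun y => 2 * id y) - fun y => 2 * (ψ * φ) y := by
      funext z
      simp only [q, Pi.sub_apply, Pi.mul_apply, id]
      ring
    rw [e]
    simpa using h
  have hC : ∀ (f : ℂ → ℂ), Differentiable ℂ f → ∀ y,
      HasD (fun z => C (f z)) (C (deriv f y)) y := fun f hf y => HasD.C (hf y).hasDerivAt
  have hR : ∀ y, ∃ R', HasD R R' y ∧ X * R' = R y - X * (X * (2 * C (ψ y) * G y * R y)) := by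
    intro y
    refine ⟨_, ((((((hG y).sub (hC φ hφ y)).sub
      ((HasD.const X y).mul (hC _ (dd _ hφ) y))).sub
      ((HasD.const (X^2) y).mul ((HasD.C (hq y)).mul (hG y)))).sub
      ((HasD.const (X^2) y).mul ((hC ψ hψ y).mul ((hG y).mul (hG y))))).add
      ((HasD.const (X^3) y).mul ((hC _ (dd _ hψ) y).mul ((hG y).mul (hG y))))).sub
      ((HasD.const (2 * X^3) y).mul ((hG y).add ((HasD.const X y).mul (hG y).dX))), ?_⟩
    rw [hψ'' y, hφ'' y]
    have h1 := hGx y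
    have h2 := hGt y
    simp only [R, q]
    simp only [map_sub, map_mul, map_add, map_ofNat]
    generalize G y = g at *
    generalize G' y = g' at *
    generalize derivative ℂ g = gt at *
    generalize derivative ℂ g' = gt' at *
    generalize (C (ψ y) : PowerSeries ℂ) = p at *
    generalize (C (φ y) : PowerSeries ℂ) = f at *
    generalize (C (deriv ψ y) : PowerSeries ℂ) = p1 at *
    generalize (C (deriv φ y) : PowerSeries ℂ) = f1 at *
    generalize (C y : PowerSeries ℂ) = z at *
    linear_combination (1 - X^2*(2*z-2*p*f) - 2*X^2*p*g + 2*X^3*p1*g - 2*X^3) * h1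
      - 2*X^4 * h2 + 2*X^3 * h1
  have hR0 : ∀ n, ∀ y, coeff n (R y) = 0 := by
    intro n
    induction n using Nat.strong_induction_on with
    | _ n ih =>
      intro y
      obtain ⟨R', h1, h2⟩ := hR y
      have h3 : R y = X * (R' + X * (2 * C (ψ y) * G y * R y)) := by
        linear_combination -h2
      rw [h3]
      rcases n with _ | n
      · simp
      rw [coeff_succ_X_mul, map_add]
      have e1 : coeff n R' = 0 := by
        have e : (fun z => coeff n (R z)) = fun _ => 0 := funext (ih n (by omega))
        have := h1 n
        rw [e] at this
        exact this.unique (hasDerivAt_const y 0)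
      rw [e1, zero_add]
      rcases n with _ | n
      · simp
      rw [coeff_succ_X_mul, coeff_mul]
      refine Finset.sum_eq_zero fun p hp => ?_
      have := Finset.HasAntidiagonal.mem_antidiagonal.1 hp
      rw [ih p.2 (by omega) y, mul_zero]
  have hRz : R x = 0 := by
    ext n; simpa using hR0 n x
  have hT := ((hC ψ hψ x).mul (((hG x).sub (hC φ hφ x)).sub
      ((HasD.const X x).mul (hC _ (dd _ hφ) x)))).sub
      ((HasD.const X x).mul ((hC _ (dd _ hψ) x).mul ((hG x).sub (hC φ hφ x))))
  have hTn := hT (n+2)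
  have hfun : (fun y => ψ y * a (n + 2) y - deriv ψ y * a (n + 1) y) = fun y =>
      coeff (n+2) (C (ψ y) * (G y - C (φ y) - X * C (deriv φ y))
        - X * (C (deriv ψ y) * (G y - C (φ y)))) := by
    ext y
    have e : C (deriv φ y) = PowerSeries.C (deriv φ y) := rfl
    simp only [map_sub, coeff_C_mul, coeff_succ_X_mul, coeff_C, G, coeff_mk]
    rcases n with _ | n <;> simp
  rw [hfun, hTn.deriv, ← coeff_succ_X_mul]
  have key : ∀ S : PowerSeries ℂ,
      X * S = C (ψ x) * (R x + 2 * X ^ 3 * (G x + X * derivative ℂ (G x))) →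
      coeff (n + 2 + 1) (X * S) = 2 * ((n : ℂ) + 1) * ψ x * a n x := by
    intro S hS
    have e : C (ψ x) * (R x + 2 * X ^ 3 * (G x + X * derivative ℂ (G x)))
      = X * (X * (X * (C (2 * ψ x) * (G x + X * derivative ℂ (G x))))) := by
      rw [hRz, map_mul, map_ofNat]; ring
    rw [hS, e]
    simp only [coeff_succ_X_mul, coeff_C_mul, map_add]
    rcases n with _ | n
    · simp [G]
    · simp only [coeff_succ_X_mul, coeff_derivative, G, coeff_mk]
      push_cast
      ring
  apply key
  rw [hψ'' x, hφ'' x]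
  have h1 := hGx x
  simp only [R, q]
  simp only [map_sub, map_mul, map_add, map_ofNat]
  linear_combination (C (ψ x) - X * C (deriv ψ x)) * h1

/-- **Lemma 2.4.** Under the conditions `ψ''/ψ = φ''/φ = −2ψφ + 2x` and `φ'ψ − φψ' = 2α`,
the entries `a_n, b_n` of the Hankel determinant formula satisfy the auxiliary recursions
`(ψ a_{n+2} − ψ' a_{n+1})' = 2(n+1) ψ a_n` and `(φ b_{n+2} − φ' b_{n+1})' = 2(n+1) φ b_n`. -/
theorem auxiliary_recursion_relations
    (α : ℂ) (φ ψ : ℂ → ℂ) (hφ : Differentiable ℂ φ) (hψ : Differentiable ℂ ψ)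
    (hψ'' : ∀ x : ℂ, deriv (deriv ψ) x = (2 * x - 2 * ψ x * φ x) * ψ x)
    (hφ'' : ∀ x : ℂ, deriv (deriv φ) x = (2 * x - 2 * ψ x * φ x) * φ x)
    (hW : ∀ x : ℂ, deriv φ x * ψ x - φ x * deriv ψ x = 2 * α)
    (a b : ℕ → ℂ → ℂ)
    (ha0 : a 0 = φ)
    (ha : ∀ n : ℕ, a (n + 1) =
      deriv (a n) + fun x => ψ x * ∑ k ∈ Finset.range n, a k x * a (n - 1 - k) x)
    (hb0 : b 0 = ψ)
    (hb : ∀ n : ℕ, b (n + 1) =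
      deriv (b n) + fun x => φ x * ∑ k ∈ Finset.range n, b k x * b (n - 1 - k) x) :
    ∀ (n : ℕ) (x : ℂ),
      deriv (fun y => ψ y * a (n + 2) y - deriv ψ y * a (n + 1) y) x
          = 2 * ((n : ℂ) + 1) * ψ x * a n x
        ∧
      deriv (fun y => φ y * b (n + 2) y - deriv φ y * b (n + 1) y) x
          = 2 * ((n : ℂ) + 1) * φ x * b n x := by
  intro n x
  refine ⟨aux_half φ ψ hφ hψ hψ'' hφ'' a ha0 ha n x,
    aux_half ψ φ hψ hφ (fun x => ?_) (fun x => ?_) b hb0 hb n x⟩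
  · rw [hφ'']; ring
  · rw [hψ'']; ring
end
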